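/- Let m ≥ 1 be an integer and let G be a connected graph that is {K_{1,3}, B_{1,m}}-free. Then G contains P_{max{3m, m+4}} as an induced subgraph if and only if G belongs to P(max{3m, m+4}). -/

import Mathlib

open SimpleGraph

def graphOfList (n : ℕ) (E : List (Fin n × Fin n)) : SimpleGraph (Fin n) :=
  SimpleGraph.fromRel (fun a b => (a, b) ∈ E)

/-- The claw `K_{1,3}`, with center `0`. -/
def K13 : SimpleGraph (Fin 4) := graphOfList 4 [(0,1), (0,2), (0,3)]

/-- `B_{1,m} = N_{1,m,0}`: a triangle `0,1,2`, a pendant vertex `3` attached to `0`,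
and a path `4,5,…,m+3` of length `m` attached at the vertex `1`. -/
def Bgraph (m : ℕ) : SimpleGraph (Fin (m + 4)) :=
  SimpleGraph.fromRel (fun a b =>
    (a.val = 0 ∧ b.val = 1) ∨ (a.val = 0 ∧ b.val = 2) ∨ (a.val = 1 ∧ b.val = 2) ∨
    (a.val = 0 ∧ b.val = 3) ∨ (a.val = 1 ∧ b.val = 4) ∨
    (4 ≤ a.val ∧ b.val = a.val + 1))

/-- `G` contains `H` as an induced subgraph. -/
def ContainsInduced {V W : Type*} (G : SimpleGraph V) (H : SimpleGraph W) : Prop :=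
  Nonempty (H ↪g G)

/-- The cliques `L 0, …, L (l-1)` form an (induced) fat `l`-path decomposition:
they are nonempty, pairwise disjoint, and two distinct vertices lying in them are adjacent
iff they lie in the same clique or in consecutive cliques. -/
def IsFatPathDecomp {V : Type*} (G : SimpleGraph V) (l : ℕ) (L : Fin l → Set V) : Prop :=
  (∀ i, (L i).Nonempty) ∧
  (∀ i j, i ≠ j → Disjoint (L i) (L j)) ∧
  (∀ (i j : Fin l) (u v : V), u ∈ L i → v ∈ L j → u ≠ v →
    (G.Adj u v ↔ i = j ∨ (i : ℕ) + 1 = (j : ℕ) ∨ (j : ℕ) + 1 = (i : ℕ)))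

/-- The cliques `L 0, …, L l` form an (induced) fat `l`-cycle decomposition:
they are nonempty, pairwise disjoint, and two distinct vertices lying in them are adjacent
iff they lie in the same clique or in (cyclically) consecutive cliques. -/
def IsFatCycleDecomp {V : Type*} (G : SimpleGraph V) (l : ℕ) (L : Fin (l + 1) → Set V) : Prop :=
  (∀ i, (L i).Nonempty) ∧
  (∀ i j, i ≠ j → Disjoint (L i) (L j)) ∧
  (∀ (i j : Fin (l + 1)) (u v : V), u ∈ L i → v ∈ L j → u ≠ v →
    (G.Adj u v ↔ i = j ∨ ((i : ℕ) + 1) % (l + 1) = (j : ℕ) ∨ ((j : ℕ) + 1) % (l + 1) = (i : ℕ)))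

/-- `G` is a fat `l`-path (so `l ≥ 5` and the fundamental cliques cover `G`). -/
def IsFatPath {V : Type*} (G : SimpleGraph V) (l : ℕ) : Prop :=
  5 ≤ l ∧ ∃ L : Fin l → Set V, IsFatPathDecomp G l L ∧ ∀ v : V, ∃ i, v ∈ L i

/-- `G` is a fat `l`-cycle (so `l ≥ 5` and the `l+1` fundamental cliques cover `G`). -/
def IsFatCycle {V : Type*} (G : SimpleGraph V) (l : ℕ) : Prop :=
  5 ≤ l ∧ ∃ L : Fin (l + 1) → Set V, IsFatCycleDecomp G l L ∧ ∀ v : V, ∃ i, v ∈ L i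

/-- `G` belongs to the family `𝒫(p)` of all fat `i`-paths and fat `i`-cycles with `i ≥ p`. -/
def MemFatFamily {V : Type*} (G : SimpleGraph V) (p : ℕ) : Prop :=
  ∃ l, p ≤ l ∧ (IsFatPath G l ∨ IsFatCycle G l)

/-!
A vertex `v` off an induced path `Q` on `l ≥ max (3 * m) (m + 4)` vertices has either no neighbours
on `Q` except possibly its ends, or exactly the closed neighbourhood in `Q` of some vertex of `Q` as
neighbours. Indeed, claw-freeness leaves at most two clusters of one or two consecutive neighbours,
with singletons only at the ends of `Q`, and in the other configurations a copy of `B_{1,m}` appears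
because one of the segments of `Q` cut out by the clusters is long.

Take `l` maximal such that `Q` exists. If `G` has an induced cycle on `l + 1` vertices, let `H` be
this cycle, otherwise let `H = Q`: a vertex attached to the ends of `Q` only would give a longer
induced path or such a cycle. In both cases, every vertex with a neighbour on a copy of `H` sees
there exactly the closed neighbourhood of a vertex `i`, hence can replace `i` in the copy. Applying
this to all the copies so obtained shows that the vertices seeing the closed neighbourhood of `i`,
for `i` in `H`, are the fundamental cliques of a fat path or cycle, which by connectedness is `G`.
-/

section

variable {V : Type*} {G : SimpleGraph V}

/-- The vertices `f 0, …, f (n - 1)` form an induced path of `G` in this order. The sequence is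
indexed by `ℕ`, with arbitrary values from `n` on, so that subpaths are shifts of it. -/
structure IsInducedPath (G : SimpleGraph V) (f : ℕ → V) (n : ℕ) : Prop where
  injOn : Set.InjOn f (Set.Iio n)
  adj_iff : ∀ i < n, ∀ j < n, (G.Adj (f i) (f j) ↔ i + 1 = j ∨ j + 1 = i)

/-- The sequence `x, f 0, f 1, …`, used to prolong an induced path at its first vertex. -/
def seqCons (x : V) (f : ℕ → V) : ℕ → V
  | 0 => x
  | k + 1 => f k

lemma containsInduced_of_injective {W : Type*} {H : SimpleGraph W} (f : W → V)
    (hf : Function.Injective f) (hadj : ∀ x y, G.Adj (f x) (f y) ↔ H.Adj x y) :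
    ContainsInduced G H :=
  ⟨⟨⟨f, hf⟩, hadj _ _⟩⟩

namespace IsInducedPath

variable {f : ℕ → V} {n : ℕ}

lemma ne (hf : IsInducedPath G f n) {i j : ℕ} (hi : i < n) (hj : j < n) (hij : i ≠ j) :
    f i ≠ f j :=
  fun h => hij (hf.injOn hi hj h)

lemma comp_add (hf : IsInducedPath G f n) {i k : ℕ} (h : i + k ≤ n) :
    IsInducedPath G (fun a => f (i + a)) k where
  injOn a ha b hb hab := by
    have := hf.injOn (show i + a < n by grind) (show i + b < n by grind) hab
    omega
  adj_iff a ha b hb := by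
    rw [hf.adj_iff _ (by omega) _ (by omega)]
    omega

lemma comp_sub (hf : IsInducedPath G f n) {i k : ℕ} (hi : i < n) (hk : k ≤ i + 1) :
    IsInducedPath G (fun a => f (i - a)) k where
  injOn a ha b hb hab := by
    have := hf.injOn (show i - a < n by grind) (show i - b < n by grind) hab
    grind
  adj_iff a ha b hb := by
    rw [hf.adj_iff _ (by omega) _ (by omega)]
    omega

lemma mono (hf : IsInducedPath G f n) {k : ℕ} (h : k ≤ n) : IsInducedPath G f k := by
  simpa only [zero_add] using hf.comp_add (i := 0) (by omega : 0 + k ≤ n)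

lemma cons (hf : IsInducedPath G f n) {x : V} (hx : ∀ k < n, x ≠ f k)
    (hadj : ∀ k < n, (G.Adj x (f k) ↔ k = 0)) : IsInducedPath G (seqCons x f) (n + 1) where
  injOn := by
    rintro (_ | i) hi (_ | j) hj hij
    · rfl
    · exact (hx j (by grind) hij).elim
    · exact (hx i (by grind) hij.symm).elim
    · exact congrArg (· + 1) (hf.injOn (by grind) (by grind) hij)
  adj_iff := by
    rintro (_ | i) hi (_ | j) hj <;> simp only [seqCons]
    · simp
    · rw [hadj j (by omega)]
      omega
    · rw [G.adj_comm, hadj i (by omega)]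
      omega
    · rw [hf.adj_iff i (by omega) j (by omega)]
      omega

lemma containsInduced_pathGraph (hf : IsInducedPath G f n) : ContainsInduced G (pathGraph n) :=
  containsInduced_of_injective (fun i : Fin n => f i)
    (fun i j hij => Fin.ext (hf.injOn i.isLt j.isLt hij))
    (fun i j => by rw [hf.adj_iff i i.isLt j j.isLt, pathGraph_adj])

end IsInducedPath

lemma exists_isInducedPath_eq [Nonempty V] {n : ℕ} (g : pathGraph n ↪g G) :
    ∃ f, IsInducedPath G f n ∧ ∀ k : Fin n, f k = g k := by
  let f : ℕ → V := Function.extend Fin.val g fun _ => Classical.arbitrary V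
  have hf : ∀ k : Fin n, f k = g k := Fin.val_injective.extend_apply _ _
  refine ⟨f, ⟨fun i hi j hj hij => ?_, fun i hi j hj => ?_⟩, hf⟩
  · rw [hf ⟨i, hi⟩, hf ⟨j, hj⟩] at hij
    exact congrArg Fin.val (g.injective hij)
  · rw [hf ⟨i, hi⟩, hf ⟨j, hj⟩, g.map_adj_iff, pathGraph_adj]

lemma containsInduced_pathGraph_iff [Nonempty V] {n : ℕ} :
    ContainsInduced G (pathGraph n) ↔ ∃ f, IsInducedPath G f n :=
  ⟨fun ⟨g⟩ => (exists_isInducedPath_eq g).imp fun _ h => h.1,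
    fun ⟨_, hf⟩ => hf.containsInduced_pathGraph⟩

lemma ContainsInduced.pathGraph_mono {n k : ℕ} [Nonempty V] (h : ContainsInduced G (pathGraph n))
    (hk : k ≤ n) : ContainsInduced G (pathGraph k) :=
  let ⟨_, hf⟩ := containsInduced_pathGraph_iff.1 h
  (hf.mono hk).containsInduced_pathGraph

lemma exists_maximal_pathGraph {p : ℕ} [Nonempty V]
    (hbdd : ∃ n, ¬ ContainsInduced G (pathGraph n)) (hp : ContainsInduced G (pathGraph p)) :
    ∃ l ≥ p, ContainsInduced G (pathGraph l) ∧ ¬ ContainsInduced G (pathGraph (l + 1)) := by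
  by_contra! hstep
  obtain ⟨n, hn⟩ := hbdd
  have hall : ∀ l ≥ p, ContainsInduced G (pathGraph l) := fun l hl =>
    Nat.le_induction hp hstep l hl
  exact hn ((hall (max n p) (le_max_right n p)).pathGraph_mono (le_max_left n p))

lemma not_containsInduced_pathGraph_card [Fintype V] (G : SimpleGraph V) :
    ¬ ContainsInduced G (pathGraph (Fintype.card V + 1)) := fun ⟨g⟩ => by
  have := Fintype.card_le_of_injective g g.injective
  rw [Fintype.card_fin] at this
  omega

lemma adj_or_adj_of_claw_free (hK : ¬ ContainsInduced G K13) {c x y z : V}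
    (hx : G.Adj c x) (hy : G.Adj c y) (hz : G.Adj c z) (hxy : x ≠ y) (hxz : x ≠ z) (hyz : y ≠ z) :
    G.Adj x y ∨ G.Adj x z ∨ G.Adj y z := by
  by_contra! h
  obtain ⟨nxy, nxz, nyz⟩ := h
  refine hK (containsInduced_of_injective ![c, x, y, z] ?_ ?_)
  · intro i j hij
    have := hx.ne
    have := hy.ne
    have := hz.ne
    fin_cases i <;> fin_cases j <;> simp_all
  · intro i j
    fin_cases i <;> fin_cases j <;> simp_all [K13, graphOfList, G.adj_comm]

/-- The position of a vertex of `B_{1,m}` on the induced path `3, 0, 1, 4, …, m + 3`. The remaining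
vertex `2` is adjacent to exactly the second and third vertex of that path; its value is junk. -/
def bgraphPos : ℕ → ℕ
  | 0 => 1
  | 1 => 2
  | 2 => 0
  | 3 => 0
  | x + 4 => x + 3

lemma bgraphPos_lt {m : ℕ} : ∀ {x : ℕ}, x < m + 4 → bgraphPos x < m + 3
  | 0, _ | 1, _ | 2, _ | 3, _ => by simp [bgraphPos]
  | x + 4, h => by simpa [bgraphPos] using by omega

lemma IsInducedPath.not_adj_iff_one_or_two {m : ℕ} (hB : ¬ ContainsInduced G (Bgraph m))
    {f : ℕ → V} (hf : IsInducedPath G f (m + 3)) (v : V) :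
    ¬ ∀ k < m + 3, (G.Adj v (f k) ↔ k = 1 ∨ k = 2) := by
  intro hv
  have hne : ∀ k < m + 3, v ≠ f k := by
    rintro k hk rfl
    have h0 := hv 0 (by omega)
    have h1 := hv 1 (by omega)
    have h2 := hv 2 (by omega)
    rw [hf.adj_iff k hk _ (by omega)] at h0 h1 h2
    omega
  refine hB (containsInduced_of_injective
    (fun x : Fin (m + 4) => if x.val = 2 then v else f (bgraphPos x)) ?_ ?_)
  · rintro ⟨x, hx⟩ ⟨y, hy⟩ hxy
    dsimp only at hxy
    rw [Fin.mk.injEq]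
    split_ifs at hxy with hx2 hy2 hy2
    · omega
    · exact (hne _ (bgraphPos_lt hy) hxy).elim
    · exact (hne _ (bgraphPos_lt hx) hxy.symm).elim
    · have := hf.injOn (bgraphPos_lt hx) (bgraphPos_lt hy) hxy
      obtain _ | _ | _ | _ | x := x <;> obtain _ | _ | _ | _ | y := y <;>
        simp_all [bgraphPos]
  · rintro ⟨x, hx⟩ ⟨y, hy⟩
    simp only [Bgraph, fromRel_adj, ne_eq, Fin.mk.injEq]
    split_ifs with hx2 hy2 hy2
    · simp [hx2, hy2]
    · rw [hv _ (bgraphPos_lt hy)]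
      obtain _ | _ | _ | _ | y := y <;> simp [hx2, bgraphPos] at hy2 ⊢
    · rw [G.adj_comm, hv _ (bgraphPos_lt hx)]
      obtain _ | _ | _ | _ | x := x <;> simp [hy2, bgraphPos] at hx2 ⊢
    · rw [hf.adj_iff _ (bgraphPos_lt hx) _ (bgraphPos_lt hy)]
      obtain _ | _ | _ | _ | x := x <;> obtain _ | _ | _ | _ | y := y <;>
        grind [bgraphPos]

section Attachment

variable {m l : ℕ} {f : ℕ → V} {v : V}

-- Otherwise the triangle `v, f 0, f 1`, the vertex `x` pendant at `v` and the path from `f 1` on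
-- form a copy of `B_{1,m}`.
lemma IsInducedPath.not_adj_of_adj_iff_zero_or_one (hB : ¬ ContainsInduced G (Bgraph m))
    (hf : IsInducedPath G f (m + 2)) (hv : ∀ k < m + 2, (G.Adj v (f k) ↔ k = 0 ∨ k = 1)) {x : V}
    (hx : ∀ k < m + 2, ¬ G.Adj x (f k)) : ¬ G.Adj v x := by
  intro hvx
  have hxv : G.Adj x v := hvx.symm
  have hv0 : G.Adj v (f 0) := (hv 0 (by omega)).2 (.inl rfl)
  have hv_ne : ∀ k < m + 2, v ≠ f k := fun k hk h => hx k hk (h ▸ hxv)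
  have hx_ne : ∀ k < m + 1, x ≠ f (1 + k) := by
    rintro (_ | k) hk rfl
    · exact hx 0 (by omega) ((hf.adj_iff _ (by omega) _ (by omega)).2 (.inr rfl))
    · have := (hv _ (by omega)).1 hvx
      omega
  have hpath : IsInducedPath G (seqCons v fun k => f (1 + k)) (m + 2) :=
    (hf.comp_add (by omega : 1 + (m + 1) ≤ m + 2)).cons (fun k hk => hv_ne _ (by omega))
      fun k hk => by rw [hv _ (by omega)]; omega
  refine (hpath.cons (x := x) ?_ ?_).not_adj_iff_one_or_two hB (f 0) ?_
  · rintro (_ | k) hk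
    · exact hxv.ne
    · exact hx_ne k (by omega)
  · rintro (_ | k) hk
    · simpa [seqCons] using hxv
    · simpa [seqCons] using hx (1 + k) (by omega)
  · rintro (_ | _ | k) hk
    · simpa [seqCons, G.adj_comm] using hx 0 (by omega)
    · simpa [seqCons] using hv0.symm
    · rw [show seqCons x (seqCons v fun k => f (1 + k)) (k + 2) = f (1 + k) from rfl,
        hf.adj_iff _ (by omega) _ (by omega)]
      omega

-- The triangle `p, v, q`, the vertex `r` pendant at `p` and the path `f` attached at `v` form a
-- copy of `B_{1,m}`.
lemma IsInducedPath.false_of_adj_iff_zero (hB : ¬ ContainsInduced G (Bgraph m))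
    (hf : IsInducedPath G f m) (hv : ∀ k < m, (G.Adj v (f k) ↔ k = 0)) {p q r : V}
    (hpq : G.Adj p q) (hpr : G.Adj p r) (hqr : ¬ G.Adj q r)
    (hvp : G.Adj v p) (hvq : G.Adj v q) (hvr : ¬ G.Adj v r)
    (hp : ∀ k < m, ¬ G.Adj p (f k)) (hq : ∀ k < m, ¬ G.Adj q (f k))
    (hr : ∀ k < m, ¬ G.Adj r (f k)) : False := by
  have hvf : IsInducedPath G (seqCons v f) (m + 1) :=
    hf.cons (fun k hk h => hp k hk (h ▸ hvp.symm)) hv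
  have hpvf : IsInducedPath G (seqCons p (seqCons v f)) (m + 2) := by
    refine hvf.cons ?_ ?_
    · rintro (_ | k) hk
      · exact hvp.ne'
      · exact fun h : p = f k => hq k (by omega) (h ▸ hpq.symm)
    · rintro (_ | k) hk
      · simpa [seqCons] using hvp.symm
      · simpa [seqCons] using hp k (by omega)
  refine (hpvf.cons (x := r) ?_ ?_).not_adj_iff_one_or_two hB q ?_
  · rintro (_ | _ | k) hk
    · exact hpr.ne'
    · exact fun h : r = v => hqr (h ▸ hvq.symm)
    · exact fun h : r = f k => hp k (by omega) (h ▸ hpr)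
  · rintro (_ | _ | k) hk
    · simpa [seqCons] using hpr.symm
    · simpa [seqCons, G.adj_comm] using hvr
    · simpa [seqCons] using hr k (by omega)
  · rintro (_ | _ | _ | k) hk
    · simpa [seqCons] using hqr
    · simpa [seqCons] using hpq.symm
    · simpa [seqCons] using hvq.symm
    · simpa [seqCons] using hq k (by omega)

lemma exists_extremes_of_lt {p : ℕ → Prop} {j : ℕ} (hj : j < l) (hpj : p j) :
    ∃ a b, a ≤ b ∧ b < l ∧ p a ∧ p b ∧ ∀ k < l, p k → a ≤ k ∧ k ≤ b := by
  have hfin : {k | k < l ∧ p k}.Finite := (Set.finite_Iio l).subset fun k hk => hk.1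
  obtain ⟨a, ha, hmin⟩ := Set.exists_min_image _ id hfin ⟨j, hj, hpj⟩
  obtain ⟨b, hb, hmax⟩ := Set.exists_max_image _ id hfin ⟨j, hj, hpj⟩
  exact ⟨a, b, hmin b hb, hb.1, ha.2, hb.2, fun k hk hpk => ⟨hmin k ⟨hk, hpk⟩, hmax k ⟨hk, hpk⟩⟩⟩

namespace IsInducedPath

lemma false_of_adj_of_adj_of_adj (hK : ¬ ContainsInduced G K13) (hf : IsInducedPath G f l)
    {i j k : ℕ} (hij : i + 2 ≤ j) (hjk : j + 2 ≤ k) (hk : k < l)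
    (hi : G.Adj v (f i)) (hj : G.Adj v (f j)) (hvk : G.Adj v (f k)) : False := by
  have := adj_or_adj_of_claw_free hK hi hj hvk (hf.ne (by omega) (by omega) (by omega))
    (hf.ne (by omega) hk (by omega)) (hf.ne (by omega) hk (by omega))
  rw [hf.adj_iff _ (by omega) _ (by omega), hf.adj_iff _ (by omega) _ hk,
    hf.adj_iff _ (by omega) _ hk] at this
  omega

lemma adj_or_adj_of_adj_succ (hK : ¬ ContainsInduced G K13) (hf : IsInducedPath G f l)
    (hv : ∀ k < l, v ≠ f k) {i : ℕ} (hi : i + 2 < l) (hvi : G.Adj v (f (i + 1))) :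
    G.Adj v (f i) ∨ G.Adj v (f (i + 2)) := by
  have := adj_or_adj_of_claw_free hK hvi.symm
    ((hf.adj_iff (i + 1) (by omega) i (by omega)).2 (.inr rfl))
    ((hf.adj_iff (i + 1) (by omega) (i + 2) hi).2 (.inl rfl))
    (hv i (by omega)) (hv (i + 2) hi) (hf.ne (by omega) hi (by omega))
  rw [hf.adj_iff i (by omega) (i + 2) hi] at this
  grind

lemma eq_zero_or_of_adj_iff_pair (hB : ¬ ContainsInduced G (Bgraph m))
    (hf : IsInducedPath G f l) (hl : 3 * m ≤ l) {a : ℕ} (ha : a + 1 < l)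
    (hv : ∀ k < l, (G.Adj v (f k) ↔ k = a ∨ k = a + 1)) : a = 0 ∨ a + 2 = l := by
  by_contra! h
  have hup : l < a + m + 2 := by
    by_contra! hle
    refine (hf.comp_add (i := a - 1) (k := m + 3) (by omega)).not_adj_iff_one_or_two hB v ?_
    intro k hk
    rw [hv _ (by omega)]
    omega
  have hdown : a < m := by
    by_contra! hle
    refine (hf.comp_sub (i := a + 2) (k := m + 3) (by omega) (by omega)).not_adj_iff_one_or_two
      hB v ?_
    intro k hk
    rw [hv _ (by omega)]
    omega
  omega

lemma false_of_adj_iff_pair_or_last (hB : ¬ ContainsInduced G (Bgraph m))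
    (hf : IsInducedPath G f l) (hl : 3 * m ≤ l) (hl4 : m + 4 ≤ l) {a : ℕ} (ha : a + 4 ≤ l)
    (hv : ∀ k < l, (G.Adj v (f k) ↔ k = a ∨ k = a + 1 ∨ k + 1 = l)) : False := by
  have hlast : G.Adj v (f (l - 1)) := (hv _ (by omega)).2 (by omega)
  have hdown : a < m := by
    by_contra! hle
    refine (hf.comp_sub (i := a + 1) (k := m + 2) (by omega)
      (by omega)).not_adj_of_adj_iff_zero_or_one hB ?_ ?_ hlast <;> intros <;>
      first | rw [hv _ (by omega)] | rw [hf.adj_iff _ (by omega) _ (by omega)]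
    all_goals omega
  have hup : l ≤ a + m + 3 := by
    by_contra! hle
    refine (hf.comp_add (i := a) (k := m + 2)
      (by omega)).not_adj_of_adj_iff_zero_or_one hB ?_ ?_ hlast <;> intros <;>
      first | rw [hv _ (by omega)] | rw [hf.adj_iff _ (by omega) _ (by omega)]
    all_goals omega
  have hmid : a = 0 ∨ l ≤ a + m + 2 := by
    by_contra! hle
    refine (hf.comp_add (i := a - 1) (k := m + 3) (by omega)).not_adj_iff_one_or_two hB v ?_
    intro k hk
    rw [hv _ (by omega)]
    omega
  omega

lemma le_add_of_adj_iff_two_pairs (hB : ¬ ContainsInduced G (Bgraph m))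
    (hf : IsInducedPath G f l) {a b : ℕ} (hab : a + 3 ≤ b) (hb : b < l)
    (hv : ∀ k < l, (G.Adj v (f k) ↔ k = a ∨ k = a + 1 ∨ k + 1 = b ∨ k = b)) :
    l ≤ b + m ∧ (b = a + 3 ∨ l < b + m) := by
  constructor
  · have hva : G.Adj v (f a) := (hv a (by omega)).2 (by omega)
    by_contra! hle
    refine (hf.comp_add (i := b - 1) (k := m + 2)
      (by omega)).not_adj_of_adj_iff_zero_or_one hB ?_ ?_ hva <;> intros <;>
      first | rw [hv _ (by omega)] | rw [hf.adj_iff _ (by omega) _ (by omega)]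
    all_goals omega
  · by_contra! hle
    apply (hf.comp_add (i := b) (k := m) (by omega)).false_of_adj_iff_zero (v := v) hB
      (p := f (a + 1)) (q := f a) (r := f (a + 2)) <;> intros <;>
      first | rw [hv _ (by omega)] | rw [hf.adj_iff _ (by omega) _ (by omega)]
    all_goals omega

lemma false_of_adj_iff_two_pairs (hB : ¬ ContainsInduced G (Bgraph m))
    (hf : IsInducedPath G f l) (hl : 3 * m ≤ l) (hl4 : m + 4 ≤ l) {a b : ℕ} (hab : a + 3 ≤ b)
    (hb : b < l) (hv : ∀ k < l, (G.Adj v (f k) ↔ k = a ∨ k = a + 1 ∨ k + 1 = b ∨ k = b)) :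
    False := by
  have hvb : G.Adj v (f b) := (hv b hb).2 (by omega)
  have hmid : b ≤ a + m + 2 := by
    by_contra! hle
    refine (hf.comp_add (i := a) (k := m + 2)
      (by omega)).not_adj_of_adj_iff_zero_or_one hB ?_ ?_ hvb <;> intros <;>
      first | rw [hv _ (by omega)] | rw [hf.adj_iff _ (by omega) _ (by omega)]
    all_goals omega
  have hright : l ≤ b + m ∧ (b = a + 3 ∨ l < b + m) :=
    hf.le_add_of_adj_iff_two_pairs hB hab hb hv
  have hleft : a < m ∧ (b = a + 3 ∨ a + 1 < m) := by
    have := (hf.comp_sub (i := l - 1) (k := l) (by omega) (by omega)).le_add_of_adj_iff_two_pairs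
      (v := v) (a := l - 1 - b) (b := l - 1 - a) hB (by omega) (by omega) fun k hk => by
        rw [hv _ (by omega)]
        omega
    omega
  have hleft_end : b + 1 = l ∨ a + 1 < m := by
    by_contra! hle
    apply (hf.comp_sub (i := a) (k := m) (by omega) (by omega)).false_of_adj_iff_zero (v := v) hB
      (p := f b) (q := f (b - 1)) (r := f (b + 1)) <;> intros <;>
      first | rw [hv _ (by omega)] | rw [hf.adj_iff _ (by omega) _ (by omega)]
    all_goals omega
  -- For `b ≥ a + 4` the bounds add up to `l < 3 * m`; for `b = a + 3` they only leave
  -- `m = 2`, `l = 6`, `a = 1`, which `hleft_end` excludes.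
  omega

lemma exists_extreme_adj (hK : ¬ ContainsInduced G K13) (hf : IsInducedPath G f l)
    (hv : ∀ k < l, v ≠ f k) {j : ℕ} (hj : j < l) (hvj : G.Adj v (f j)) :
    ∃ a b, a ≤ b ∧ b < l ∧ G.Adj v (f a) ∧ G.Adj v (f b) ∧
      (∀ k < l, G.Adj v (f k) → a ≤ k ∧ k ≤ b ∧ (k ≤ a + 1 ∨ b ≤ k + 1)) ∧
      (a = 0 ∨ a + 1 = l ∨ a < b ∧ G.Adj v (f (a + 1))) ∧
      (b = 0 ∨ b + 1 = l ∨ a < b ∧ G.Adj v (f (b - 1))) := by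
  obtain ⟨a, b, hab, hb, hva, hvb, hext⟩ := exists_extremes_of_lt (p := (G.Adj v <| f ·)) hj hvj
  refine ⟨a, b, hab, hb, hva, hvb, fun k hk hvk => ?_, ?_, ?_⟩
  · have := hext k hk hvk
    by_contra! hne
    exact hf.false_of_adj_of_adj_of_adj hK (by omega) (by omega) hb hva hvk hvb
  · by_contra! ⟨ha0, hal, hna⟩
    obtain ⟨i, rfl⟩ := Nat.exists_eq_succ_of_ne_zero ha0
    obtain h | h := hf.adj_or_adj_of_adj_succ hK hv (by omega) hva
    · have := hext i (by omega) h
      omega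
    · exact hna (hext _ (by omega) h).2 h
  · by_contra! ⟨hb0, hbl, hnb⟩
    obtain ⟨i, rfl⟩ := Nat.exists_eq_succ_of_ne_zero hb0
    obtain h | h := hf.adj_or_adj_of_adj_succ hK hv (by omega) hvb
    · exact hnb (Nat.lt_succ_of_le (hext _ (by omega) h).1) h
    · have := hext _ (by omega) h
      omega

theorem adj_imp_end_or_exists_adj_iff (hK : ¬ ContainsInduced G K13)
    (hB : ¬ ContainsInduced G (Bgraph m)) (hf : IsInducedPath G f l) (hl : 3 * m ≤ l)
    (hl4 : m + 4 ≤ l) (hv : ∀ k < l, v ≠ f k) :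
    (∀ k < l, G.Adj v (f k) → k = 0 ∨ k + 1 = l) ∨
      ∃ j < l, ∀ k < l, (G.Adj v (f k) ↔ k ≤ j + 1 ∧ j ≤ k + 1) := by
  by_cases! hnone : ∀ k < l, ¬ G.Adj v (f k)
  · exact .inl fun k hk hvk => (hnone k hk hvk).elim
  obtain ⟨j, hj, hvj⟩ := hnone
  obtain ⟨a, b, hab, hb, hva, hvb, hsub, hleft, hright⟩ := hf.exists_extreme_adj hK hv hj hvj
  by_cases hva1 : a < b ∧ G.Adj v (f (a + 1)) <;> by_cases hvb1 : a < b ∧ G.Adj v (f (b - 1))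
  · have hiff : ∀ k < l, (G.Adj v (f k) ↔ k = a ∨ k = a + 1 ∨ k + 1 = b ∨ k = b) := by grind
    obtain rfl | rfl | hd : b = a + 1 ∨ b = a + 2 ∨ a + 3 ≤ b := by omega
    · obtain rfl | hal := hf.eq_zero_or_of_adj_iff_pair (v := v) hB hl hb (by grind)
      · exact .inr ⟨0, by omega, by grind⟩
      · exact .inr ⟨a + 1, by omega, by grind⟩
    · exact .inr ⟨a + 1, by omega, by grind⟩
    · exact (hf.false_of_adj_iff_two_pairs hB hl hl4 hd hb hiff).elim
  · exact (hf.false_of_adj_iff_pair_or_last (v := v) (a := a) hB hl hl4 (by grind) (by grind)).elim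
  · exact ((hf.comp_sub (i := l - 1) (k := l) (by omega) (by omega)).false_of_adj_iff_pair_or_last
      (v := v) (a := l - 1 - b) hB hl hl4 (by grind) (by grind)).elim
  · exact .inl (by grind)

end IsInducedPath

end Attachment

section BlowUp

variable {I : Type*} {H : SimpleGraph I}

/-- The closed neighbourhood `N[v]` of a vertex `v`. -/
def closedNbhd (G : SimpleGraph V) (v : V) : Set V :=
  insert v (G.neighborSet v)

lemma mem_closedNbhd {v w : V} : w ∈ closedNbhd G v ↔ w = v ∨ G.Adj v w :=
  Iff.rfl

lemma self_mem_closedNbhd (v : V) : v ∈ closedNbhd G v :=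
  Set.mem_insert _ _

lemma mem_closedNbhd_comm {v w : V} : w ∈ closedNbhd G v ↔ v ∈ closedNbhd G w := by
  rw [mem_closedNbhd, mem_closedNbhd, eq_comm, G.adj_comm]

/-- The trace of a vertex `v` of `G` on an induced copy `f` of `H`: the vertices of `H` whose image
lies in the closed neighbourhood of `v`. -/
def trace (f : H ↪g G) (v : V) : Set I :=
  f ⁻¹' closedNbhd G v

lemma mem_trace {f : H ↪g G} {v : V} {i : I} : i ∈ trace f v ↔ f i ∈ closedNbhd G v :=
  Iff.rfl

lemma mem_trace_of_notMem_range {f : H ↪g G} {v : V} (hv : v ∉ Set.range f) {i : I} :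
    i ∈ trace f v ↔ G.Adj v (f i) := by
  rw [mem_trace, mem_closedNbhd, or_iff_right fun h => hv ⟨i, h⟩]

lemma trace_apply (f : H ↪g G) (i : I) : trace f (f i) = closedNbhd H i := by
  ext j
  simp [mem_trace, mem_closedNbhd]

/-- The sets `L i` are the cliques of an induced subgraph of `G` obtained from `H` by replacing each
vertex `i` with a nonempty clique `L i`. -/
structure IsBlowUp (G : SimpleGraph V) (H : SimpleGraph I) (L : I → Set V) : Prop where
  nonempty : ∀ i, (L i).Nonempty
  disjoint : ∀ i j, i ≠ j → Disjoint (L i) (L j)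
  adj_iff : ∀ i j u v, u ∈ L i → v ∈ L j → u ≠ v → (G.Adj u v ↔ j ∈ closedNbhd H i)

lemma IsBlowUp.containsInduced {L : I → Set V} (hL : IsBlowUp G H L) : ContainsInduced G H := by
  choose f hf using hL.nonempty
  have hne : ∀ i j, i ≠ j → f i ≠ f j := fun i j hij =>
    (hL.disjoint i j hij).ne_of_mem (hf i) (hf j)
  refine containsInduced_of_injective f (fun i j h => of_not_not fun hij => hne i j hij h) ?_
  intro i j
  obtain rfl | hij := eq_or_ne i j
  · simp
  · rw [hL.adj_iff i j _ _ (hf i) (hf j) (hne i j hij), mem_closedNbhd, or_iff_right hij.symm]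

/-- Conditions on `H` ensuring that the vertices with trace a closed neighbourhood of `H` form a
blow-up of `H`: no isolated vertices, no two vertices with the same closed neighbourhood, and no
two vertices `i`, `j` such that toggling `i` in `N[j]` and toggling `j` in `N[i]` both yield closed
neighbourhoods again. -/
structure IsRigid (H : SimpleGraph I) : Prop where
  exists_adj : ∀ i, ∃ j, H.Adj i j
  closedNbhd_injective : Function.Injective (closedNbhd H)
  not_symmDiff_eq_singleton : ∀ i i' j j', symmDiff (closedNbhd H j') (closedNbhd H j) = {i} →
    symmDiff (closedNbhd H i') (closedNbhd H i) ≠ {j}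

lemma IsRigid.exists_mem_closedNbhd_ne (hH : IsRigid H) (i j : I) :
    ∃ k ∈ closedNbhd H j, k ≠ i := by
  obtain ⟨k, hk⟩ := hH.exists_adj j
  obtain rfl | hji := eq_or_ne j i
  · exact ⟨k, .inr hk, hk.ne'⟩
  · exact ⟨j, self_mem_closedNbhd j, hji⟩

lemma exists_embedding_of_mem_closedNbhd_iff (hH : Function.Injective (closedNbhd H)) {h : I → V}
    (hh : ∀ i j, h j ∈ closedNbhd G (h i) ↔ j ∈ closedNbhd H i) : ∃ g : H ↪g G, ⇑g = h := by
  have hinj : Function.Injective h := fun i j hij => hH <| by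
    ext k
    rw [← hh, ← hh, hij]
  refine ⟨⟨⟨h, hinj⟩, fun {i j} => ?_⟩, rfl⟩
  have := hh i j
  rw [mem_closedNbhd, mem_closedNbhd, hinj.eq_iff] at this
  obtain rfl | hij := eq_or_ne i j
  · simp
  · rwa [or_iff_right hij.symm, or_iff_right hij.symm] at this

lemma exists_embedding_update (hH : Function.Injective (closedNbhd H)) {f : H ↪g G} {i : I} {u : V}
    (hu : trace f u = closedNbhd H i) : ∃ g : H ↪g G, g i = u ∧ ∀ k ≠ i, g k = f k := by
  classical
  have hmem : ∀ k, f k ∈ closedNbhd G u ↔ k ∈ closedNbhd H i := fun k => by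
    rw [← hu, mem_trace]
  obtain ⟨g, hg⟩ := exists_embedding_of_mem_closedNbhd_iff (G := G) hH
    (h := Function.update f i u) fun j k => by
      obtain rfl | hj := eq_or_ne j i <;> obtain rfl | hk := eq_or_ne k j
      · simp [self_mem_closedNbhd]
      · simpa [hk] using hmem k
      · simp [self_mem_closedNbhd]
      · obtain rfl | hki := eq_or_ne k i
        · simpa [hj, mem_closedNbhd_comm] using hmem j
        · simpa [hj, hki, ← mem_trace] using Set.ext_iff.1 (trace_apply f j) k
  exact ⟨g, by simp [hg], fun k hk => by simp [hg, hk]⟩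

lemma exists_symmDiff_eq_singleton (hH : IsRigid H) {f : H ↪g G}
    (hT : ∀ (g : H ↪g G) (v : V), (trace g v).Nonempty → trace g v ∈ Set.range (closedNbhd H))
    {i j : I} {u v : V} (hu : trace f u = closedNbhd H i) (hv : trace f v = closedNbhd H j)
    (huv : u ≠ v) (hadj : ¬ (G.Adj u v ↔ j ∈ closedNbhd H i)) :
    ∃ j', symmDiff (closedNbhd H j') (closedNbhd H j) = {i} := by
  obtain ⟨g, hgi, hg⟩ := exists_embedding_update hH.closedNbhd_injective hu
  have hmem : ∀ k ≠ i, (k ∈ trace g v ↔ k ∈ closedNbhd H j) := fun k hk => by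
    rw [← hv, mem_trace, mem_trace, hg k hk]
  have hmem_i : ¬ (i ∈ trace g v ↔ i ∈ closedNbhd H j) := by
    rwa [mem_trace, hgi, mem_closedNbhd, or_iff_right huv, G.adj_comm, mem_closedNbhd_comm]
  obtain ⟨k, hk, hki⟩ := hH.exists_mem_closedNbhd_ne i j
  obtain ⟨j', hj'⟩ := hT g v ⟨k, (hmem k hki).2 hk⟩
  refine ⟨j', Set.ext fun k => ?_⟩
  rw [hj', Set.mem_symmDiff, Set.mem_singleton_iff]
  obtain rfl | hki := eq_or_ne k i
  · tauto
  · have := hmem k hki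
    tauto

theorem isBlowUp_of_trace_mem_range (hH : IsRigid H) (f : H ↪g G)
    (hT : ∀ (g : H ↪g G) (v : V), (trace g v).Nonempty → trace g v ∈ Set.range (closedNbhd H)) :
    IsBlowUp G H fun i => {v | trace f v = closedNbhd H i} where
  nonempty i := ⟨f i, trace_apply f i⟩
  disjoint i j hij := Set.disjoint_left.2 fun v (hi : _ = _) (hj : _ = _) =>
    hij (hH.closedNbhd_injective (hi.symm.trans hj))
  adj_iff i j u v hu hv huv := by
    by_contra hadj
    obtain ⟨j', hj'⟩ := exists_symmDiff_eq_singleton hH hT hu hv huv hadj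
    obtain ⟨i', hi'⟩ := exists_symmDiff_eq_singleton hH hT hv hu huv.symm
      (by rwa [G.adj_comm, mem_closedNbhd_comm])
    exact hH.not_symmDiff_eq_singleton i i' j j' hj' hi'

lemma trace_mem_range_of_connected (hconn : G.Connected) (hH : IsRigid H) [Nonempty I] (f : H ↪g G)
    (hT : ∀ (g : H ↪g G) (v : V), (trace g v).Nonempty → trace g v ∈ Set.range (closedNbhd H))
    (v : V) : ∃ i, trace f v = closedNbhd H i := by
  have hstep : ∀ u w, G.Adj u w → (∃ i, trace f u = closedNbhd H i) →
      ∃ i, trace f w = closedNbhd H i := by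
    rintro u w huw ⟨i, hi⟩
    obtain ⟨g, hgi, hg⟩ := exists_embedding_update hH.closedNbhd_injective hi
    obtain ⟨j, hj⟩ := hT g w ⟨i, .inr (hgi ▸ huw.symm)⟩
    obtain ⟨k, hk, hki⟩ := hH.exists_mem_closedNbhd_ne i j
    obtain ⟨j', hj'⟩ := hT f w ⟨k, by rwa [mem_trace, ← hg k hki, ← mem_trace, ← hj]⟩
    exact ⟨j', hj'.symm⟩
  let i := Classical.arbitrary I
  induction (reachable_iff_reflTransGen _ _).1 (hconn.preconnected (f i) v) with
  | refl => exact ⟨i, trace_apply f i⟩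
  | tail _ huw ih => exact hstep _ _ huw ih

theorem exists_isBlowUp_of_trace_mem_range (hconn : G.Connected) (hH : IsRigid H) [Nonempty I]
    (f : H ↪g G)
    (hT : ∀ (g : H ↪g G) (v : V), (trace g v).Nonempty → trace g v ∈ Set.range (closedNbhd H)) :
    ∃ L, IsBlowUp G H L ∧ ∀ v, ∃ i, v ∈ L i :=
  ⟨_, isBlowUp_of_trace_mem_range hH f hT, trace_mem_range_of_connected hconn hH f hT⟩

end BlowUp

section PathGraph

variable {l : ℕ}

lemma mem_closedNbhd_pathGraph {j k : Fin l} :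
    k ∈ closedNbhd (pathGraph l) j ↔ k.val ≤ j + 1 ∧ j.val ≤ k + 1 := by
  rw [mem_closedNbhd, pathGraph_adj, Fin.ext_iff]
  omega

lemma closedNbhd_pathGraph_injective (hl : 3 ≤ l) :
    Function.Injective (closedNbhd (pathGraph l)) := by
  intro i j hij
  have h (k : ℕ) (hk : k < l) : k ≤ i.val + 1 ∧ i.val ≤ k + 1 ↔ k ≤ j.val + 1 ∧ j.val ≤ k + 1 := by
    simpa only [mem_closedNbhd_pathGraph] using Set.ext_iff.1 hij ⟨k, hk⟩
  have h1 := h (i + 1)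
  have h2 := h (j + 1)
  have h3 := h (i - 1)
  have h4 := h (j - 1)
  omega

lemma symmDiff_closedNbhd_pathGraph_eq_singleton {i j j' : Fin l}
    (h : symmDiff (closedNbhd (pathGraph l) j') (closedNbhd (pathGraph l) j) = {i}) :
    j.val ≤ 1 ∧ i.val = 2 ∨ l ≤ j.val + 2 ∧ i.val + 3 = l := by
  have hmem (k : ℕ) (hk : k < l) :
      (k ≤ j'.val + 1 ∧ j'.val ≤ k + 1 ↔ k ≤ j.val + 1 ∧ j.val ≤ k + 1) ↔ k ≠ i := by
    have := Set.ext_iff.1 h ⟨k, hk⟩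
    simp only [Set.mem_symmDiff, mem_closedNbhd_pathGraph, Set.mem_singleton_iff,
      Fin.ext_iff] at this
    tauto
  have h1 := hmem (j - 1)
  have h2 := hmem j
  have h3 := hmem (j + 1)
  have h4 := hmem (j' - 1)
  have h5 := hmem j'
  have h6 := hmem (j' + 1)
  grind

lemma isRigid_pathGraph (hl : 5 ≤ l) : IsRigid (pathGraph l) where
  exists_adj :=
    have : Nontrivial (Fin l) := Fin.nontrivial_iff_two_le.2 (by omega)
    (pathGraph_preconnected l).exists_adj_of_nontrivial
  closedNbhd_injective := closedNbhd_pathGraph_injective (by omega)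
  not_symmDiff_eq_singleton i i' j j' hj hi := by
    have := symmDiff_closedNbhd_pathGraph_eq_singleton hj
    have := symmDiff_closedNbhd_pathGraph_eq_singleton hi
    omega

lemma isFatPathDecomp_iff_isBlowUp {L : Fin l → Set V} :
    IsFatPathDecomp G l L ↔ IsBlowUp G (pathGraph l) L := by
  have hadj (i j : Fin l) :
      i = j ∨ i.val + 1 = j ∨ j.val + 1 = i ↔ j ∈ closedNbhd (pathGraph l) i := by
    rw [mem_closedNbhd, pathGraph_adj, eq_comm]
  simp only [IsFatPathDecomp, hadj]
  exact ⟨fun ⟨h₁, h₂, h₃⟩ => ⟨h₁, h₂, h₃⟩, fun ⟨h₁, h₂, h₃⟩ => ⟨h₁, h₂, h₃⟩⟩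

end PathGraph

section CycleGraph

variable {l : ℕ}

lemma cycleGraph_adj_iff_val (hl : 1 ≤ l) {z w : Fin (l + 1)} :
    (cycleGraph (l + 1)).Adj z w ↔ z.val + 1 = w ∨ w.val + 1 = z ∨
      z.val = 0 ∧ w.val = l ∨ z.val = l ∧ w.val = 0 := by
  rw [cycleGraph_adj']
  obtain hzw | rfl | hwz := lt_trichotomy z w
  · rw [Fin.coe_sub_iff_lt.2 hzw, Fin.sub_val_of_le hzw.le]
    omega
  · rw [sub_self, Fin.val_zero]
    omega
  · rw [Fin.coe_sub_iff_lt.2 hwz, Fin.sub_val_of_le hwz.le]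
    omega

lemma cycleGraph_adj_iff_val_sub (hl : 1 ≤ l) (c : Fin (l + 1)) {z w : Fin (l + 1)} :
    (cycleGraph (l + 1)).Adj z w ↔ (z - c).val + 1 = (w - c).val ∨ (w - c).val + 1 = (z - c).val ∨
      (z - c).val = 0 ∧ (w - c).val = l ∨ (z - c).val = l ∧ (w - c).val = 0 := by
  rw [← cycleGraph_adj_iff_val hl, cycleGraph_adj', cycleGraph_adj', sub_sub_sub_cancel_right,
    sub_sub_sub_cancel_right]

lemma mem_closedNbhd_cycleGraph_iff_val_sub (hl : 1 ≤ l) (c : Fin (l + 1)) {z w : Fin (l + 1)} :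
    w ∈ closedNbhd (cycleGraph (l + 1)) z ↔
      (w - c).val ≤ (z - c).val + 1 ∧ (z - c).val ≤ (w - c).val + 1 ∨
      (z - c).val = 0 ∧ (w - c).val = l ∨ (z - c).val = l ∧ (w - c).val = 0 := by
  rw [mem_closedNbhd, cycleGraph_adj_iff_val_sub hl c, ← sub_left_inj (a := c), Fin.ext_iff]
  omega

lemma val_add_ofNat_sub (c : Fin (l + 1)) {k : ℕ} (hk : k < l + 1) :
    (c + Fin.ofNat (l + 1) k - c).val = k := by
  rw [add_sub_cancel_left, Fin.val_ofNat, Nat.mod_eq_of_lt hk]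

lemma add_ofNat_val_sub (c z : Fin (l + 1)) : c + Fin.ofNat (l + 1) (z - c).val = z := by
  rw [Fin.ofNat_val_eq_self, add_sub_cancel]

lemma closedNbhd_cycleGraph_injective (hl : 4 ≤ l) :
    Function.Injective (closedNbhd (cycleGraph (l + 1))) := by
  intro i j hij
  let c := i - Fin.ofNat (l + 1) 2
  have hi : (i - c).val = 2 := by
    rw [sub_sub_cancel, Fin.val_ofNat, Nat.mod_eq_of_lt (by omega)]
  have h (k : ℕ) := Set.ext_iff.1 hij (c + Fin.ofNat (l + 1) k)
  simp only [mem_closedNbhd_cycleGraph_iff_val_sub (by omega : 1 ≤ l) c] at h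
  have h1 := h 1
  have h3 := h 3
  rw [val_add_ofNat_sub c (by omega)] at h1 h3
  have : (i - c).val = (j - c).val := by omega
  exact sub_left_inj.1 (Fin.ext this)

lemma ncard_closedNbhd (G : SimpleGraph V) (v : V) [Fintype (G.neighborSet v)] :
    (closedNbhd G v).ncard = G.degree v + 1 := by
  rw [closedNbhd, Set.ncard_insert_of_notMem (by simp), Set.ncard_eq_toFinset_card',
    Set.toFinset_card, card_neighborSet_eq_degree]

lemma symmDiff_ne_singleton_of_ncard_eq {α : Type*} {s t : Set α} (hs : s.Finite) (ht : t.Finite)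
    (hst : s.ncard = t.ncard) (a : α) : symmDiff s t ≠ {a} := by
  intro h
  have hcard : (s \ t).ncard + (t \ s).ncard = 1 := by
    rw [← Set.ncard_union_eq disjoint_sdiff_sdiff hs.sdiff ht.sdiff, ← Set.ncard_singleton a, ← h]
    rfl
  have h1 := Set.ncard_inter_add_ncard_sdiff_eq_ncard s t hs
  have h2 := Set.ncard_inter_add_ncard_sdiff_eq_ncard t s ht
  rw [Set.inter_comm] at h2
  omega

lemma isRigid_cycleGraph (hl : 4 ≤ l) : IsRigid (cycleGraph (l + 1)) where
  exists_adj :=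
    have : Nontrivial (Fin (l + 1)) := Fin.nontrivial_iff_two_le.2 (by omega)
    cycleGraph_preconnected.exists_adj_of_nontrivial
  closedNbhd_injective := closedNbhd_cycleGraph_injective hl
  not_symmDiff_eq_singleton i i' j j' hj := by
    obtain ⟨n, rfl⟩ : ∃ n, l = n + 2 := ⟨l - 2, by omega⟩
    refine (symmDiff_ne_singleton_of_ncard_eq (Set.toFinite _) (Set.toFinite _) ?_ i hj).elim
    rw [ncard_closedNbhd, ncard_closedNbhd, cycleGraph_degree_three_le, cycleGraph_degree_three_le]

lemma isFatCycleDecomp_iff_isBlowUp (hl : 1 ≤ l) {L : Fin (l + 1) → Set V} :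
    IsFatCycleDecomp G l L ↔ IsBlowUp G (cycleGraph (l + 1)) L := by
  have hmod (i j : Fin (l + 1)) :
      (i.val + 1) % (l + 1) = j ↔ i.val + 1 = j ∨ i.val = l ∧ j.val = 0 := by
    obtain hi | hi := Nat.lt_or_eq_of_le i.is_le
    · rw [Nat.mod_eq_of_lt (by omega)]
      omega
    · rw [hi, Nat.mod_self]
      omega
  have hadj (i j : Fin (l + 1)) : i = j ∨ (i.val + 1) % (l + 1) = j ∨ (j.val + 1) % (l + 1) = i ↔
      j ∈ closedNbhd (cycleGraph (l + 1)) i := by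
    rw [mem_closedNbhd, cycleGraph_adj_iff_val hl, hmod, hmod, Fin.ext_iff, Fin.ext_iff]
    omega
  simp only [IsFatCycleDecomp, hadj]
  exact ⟨fun ⟨h₁, h₂, h₃⟩ => ⟨h₁, h₂, h₃⟩, fun ⟨h₁, h₂, h₃⟩ => ⟨h₁, h₂, h₃⟩⟩

lemma isInducedPath_cycleGraph_embedding (hl : 1 ≤ l) (g : cycleGraph (l + 1) ↪g G)
    (c : Fin (l + 1)) : IsInducedPath G (fun k => g (c + Fin.ofNat (l + 1) k)) l where
  injOn a ha b hb hab := by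
    rw [← val_add_ofNat_sub c (Nat.lt_succ_of_lt ha), ← val_add_ofNat_sub c (Nat.lt_succ_of_lt hb),
      g.injective hab]
  adj_iff a ha b hb := by
    rw [g.map_adj_iff, cycleGraph_adj_iff_val_sub hl c, val_add_ofNat_sub c (by omega),
      val_add_ofNat_sub c (by omega)]
    omega

lemma IsInducedPath.containsInduced_cycleGraph {f : ℕ → V} (hl : 1 ≤ l) (hf : IsInducedPath G f l)
    {x : V} (hx : ∀ k < l, x ≠ f k) (hadj : ∀ k < l, (G.Adj x (f k) ↔ k = 0 ∨ k + 1 = l)) :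
    ContainsInduced G (cycleGraph (l + 1)) := by
  refine containsInduced_of_injective (fun z : Fin (l + 1) => seqCons x f z) ?_ ?_
  · rintro ⟨_ | i, hi⟩ ⟨_ | j, hj⟩ hij
    · rfl
    · exact (hx j (by omega) hij).elim
    · exact (hx i (by omega) hij.symm).elim
    · exact Fin.ext (congrArg (· + 1) (hf.injOn (by grind) (by grind) hij))
  · rintro ⟨_ | i, hi⟩ ⟨_ | j, hj⟩ <;> rw [cycleGraph_adj_iff_val hl] <;>
      simp only [seqCons, true_and, and_true]
    · exact iff_of_false G.irrefl (by omega)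
    · rw [hadj j (by omega)]
      omega
    · rw [G.adj_comm, hadj i (by omega)]
      omega
    · rw [hf.adj_iff i (by omega) j (by omega)]
      omega

end CycleGraph

section Trace

variable {l m : ℕ}

lemma exists_adj_cycleGraph_embedding_iff (hK : ¬ ContainsInduced G K13)
    (hB : ¬ ContainsInduced G (Bgraph m)) (hl : 3 * m ≤ l) (hl4 : m + 4 ≤ l)
    (g : cycleGraph (l + 1) ↪g G) {v : V} (hv : v ∉ Set.range g) {x : Fin (l + 1)}
    (hx : G.Adj v (g x)) {a : ℕ} (ha : 1 ≤ a) (hal : a + 2 ≤ l) :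
    ∃ j ≤ a + 1, a ≤ j + 1 ∧ ∀ k < l,
      (G.Adj v (g (x - Fin.ofNat (l + 1) a + Fin.ofNat (l + 1) k)) ↔ k ≤ j + 1 ∧ j ≤ k + 1) := by
  have hf := isInducedPath_cycleGraph_embedding (by omega) g (x - Fin.ofNat (l + 1) a)
  have hxa : G.Adj v (g (x - Fin.ofNat (l + 1) a + Fin.ofNat (l + 1) a)) := by
    rwa [sub_add_cancel]
  obtain hend | ⟨j, -, hj⟩ := hf.adj_imp_end_or_exists_adj_iff hK hB hl hl4
    fun k _ h => hv ⟨_, h.symm⟩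
  · have := hend a (by omega) hxa
    omega
  · have := (hj a (by omega)).1 hxa
    exact ⟨j, this.2, this.1, hj⟩

lemma trace_cycleGraph_mem_range (hK : ¬ ContainsInduced G K13)
    (hB : ¬ ContainsInduced G (Bgraph m)) (hl5 : 5 ≤ l) (hl : 3 * m ≤ l) (hl4 : m + 4 ≤ l)
    (g : cycleGraph (l + 1) ↪g G) (v : V) (hne : (trace g v).Nonempty) :
    trace g v ∈ Set.range (closedNbhd (cycleGraph (l + 1))) := by
  by_cases hv : v ∈ Set.range g
  · obtain ⟨i, rfl⟩ := hv
    exact ⟨i, (trace_apply g i).symm⟩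
  obtain ⟨x, hx⟩ := hne
  rw [mem_trace_of_notMem_range hv] at hx
  obtain ⟨j, hj3, hj1, hj⟩ :=
    exists_adj_cycleGraph_embedding_iff hK hB hl hl4 g hv hx (a := 2) (by omega) (by omega)
  -- The path on `l` vertices starting two vertices before `x` misses one vertex of the cycle. This
  -- is the first vertex of the path starting three vertices before `x`, too far from `x` there.
  obtain ⟨j', -, hj', hj0⟩ :=
    exists_adj_cycleGraph_embedding_iff hK hB hl hl4 g hv hx (a := 3) (by omega) (by omega)
  set c := x - Fin.ofNat (l + 1) 2 with hc
  have hlast : x - Fin.ofNat (l + 1) 3 + Fin.ofNat (l + 1) 0 = c + Fin.ofNat (l + 1) l := by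
    have : Fin.ofNat (l + 1) l + Fin.ofNat (l + 1) 3 = Fin.ofNat (l + 1) 2 := Fin.ext <| by
      simp only [Fin.val_add, Fin.val_ofNat, ← Nat.add_mod]
      rw [show l + 3 = l + 1 + 2 from rfl, Nat.add_mod_left]
    rw [Fin.ofNat_zero, add_zero, sub_eq_iff_eq_add, add_assoc, this, hc, sub_add_cancel]
  refine ⟨c + Fin.ofNat (l + 1) j, Set.ext fun z => ?_⟩
  rw [mem_closedNbhd_cycleGraph_iff_val_sub (by omega) c, val_add_ofNat_sub c (by omega),
    mem_trace_of_notMem_range hv, ← add_ofNat_val_sub c z, val_add_ofNat_sub c (Fin.isLt _)]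
  obtain hk | hk := Nat.lt_or_eq_of_le (z - c).is_le
  · rw [hj _ hk]
    omega
  · rw [hk, ← hlast, hj0 0 (by omega)]
    omega

lemma IsInducedPath.not_adj_of_adj_imp_end {f : ℕ → V} (hl : 1 ≤ l) (hf : IsInducedPath G f l)
    (hP : ¬ ContainsInduced G (pathGraph (l + 1))) (hC : ¬ ContainsInduced G (cycleGraph (l + 1)))
    {v : V} (hv : ∀ k < l, v ≠ f k) (hend : ∀ k < l, G.Adj v (f k) → k = 0 ∨ k + 1 = l) :
    ∀ k < l, ¬ G.Adj v (f k) := by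
  have hfirst : G.Adj v (f 0) → ¬ G.Adj v (f (l - 1)) → False := fun h0 h1 =>
    hP (hf.cons hv fun k hk => ⟨fun h => by grind, by grind⟩).containsInduced_pathGraph
  have hlast : ¬ G.Adj v (f 0) → G.Adj v (f (l - 1)) → False := fun h0 h1 =>
    hP ((hf.comp_sub (i := l - 1) (k := l) (by omega) (by omega)).cons
      (fun k hk => hv _ (by omega))
      fun k hk => ⟨fun h => by grind, by grind⟩).containsInduced_pathGraph
  have hboth : G.Adj v (f 0) → G.Adj v (f (l - 1)) → False := fun h0 h1 =>
    hC <| hf.containsInduced_cycleGraph hl hv fun k hk => ⟨hend k hk, by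
      rintro (rfl | rfl)
      exacts [h0, h1]⟩
  intro k hk hadj
  obtain rfl | hkl := hend k hk hadj
  · tauto
  · obtain rfl : k = l - 1 := by omega
    tauto

lemma trace_pathGraph_mem_range (hK : ¬ ContainsInduced G K13)
    (hB : ¬ ContainsInduced G (Bgraph m)) (hl : 3 * m ≤ l) (hl4 : m + 4 ≤ l)
    (hP : ¬ ContainsInduced G (pathGraph (l + 1))) (hC : ¬ ContainsInduced G (cycleGraph (l + 1)))
    (g : pathGraph l ↪g G) (v : V) (hne : (trace g v).Nonempty) :
    trace g v ∈ Set.range (closedNbhd (pathGraph l)) := by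
  by_cases hv : v ∈ Set.range g
  · obtain ⟨i, rfl⟩ := hv
    exact ⟨i, (trace_apply g i).symm⟩
  have : Nonempty V := ⟨v⟩
  obtain ⟨f, hf, hfg⟩ := exists_isInducedPath_eq g
  have hmem : ∀ z, z ∈ trace g v ↔ G.Adj v (f z) := fun z => by
    rw [mem_trace_of_notMem_range hv, hfg]
  have hvf : ∀ k < l, v ≠ f k := fun k hk h => hv ⟨⟨k, hk⟩, by rw [h, ← hfg]⟩
  obtain hend | ⟨j, hjl, hj⟩ := hf.adj_imp_end_or_exists_adj_iff hK hB hl hl4 hvf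
  · obtain ⟨x, hx⟩ := hne
    exact (hf.not_adj_of_adj_imp_end (by omega) hP hC hvf hend x x.isLt ((hmem x).1 hx)).elim
  · refine ⟨⟨j, hjl⟩, Set.ext fun z => ?_⟩
    rw [hmem, hj z z.isLt, mem_closedNbhd_pathGraph]

end Trace

section FatFamily

variable {l m : ℕ}

theorem isFatCycle_of_containsInduced_cycleGraph (hconn : G.Connected)
    (hK : ¬ ContainsInduced G K13) (hB : ¬ ContainsInduced G (Bgraph m)) (hl5 : 5 ≤ l)
    (hl : 3 * m ≤ l) (hl4 : m + 4 ≤ l) (hC : ContainsInduced G (cycleGraph (l + 1))) :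
    IsFatCycle G l := by
  obtain ⟨g⟩ := hC
  obtain ⟨L, hL, hcover⟩ := exists_isBlowUp_of_trace_mem_range hconn
    (isRigid_cycleGraph (by omega)) g (trace_cycleGraph_mem_range hK hB hl5 hl hl4)
  exact ⟨hl5, L, (isFatCycleDecomp_iff_isBlowUp (by omega)).2 hL, hcover⟩

theorem isFatPath_of_containsInduced_pathGraph (hconn : G.Connected)
    (hK : ¬ ContainsInduced G K13) (hB : ¬ ContainsInduced G (Bgraph m)) (hl5 : 5 ≤ l)
    (hl : 3 * m ≤ l) (hl4 : m + 4 ≤ l) (hP : ContainsInduced G (pathGraph l))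
    (hP' : ¬ ContainsInduced G (pathGraph (l + 1)))
    (hC : ¬ ContainsInduced G (cycleGraph (l + 1))) : IsFatPath G l := by
  obtain ⟨g⟩ := hP
  have : Nonempty (Fin l) := ⟨⟨0, by omega⟩⟩
  obtain ⟨L, hL, hcover⟩ := exists_isBlowUp_of_trace_mem_range hconn
    (isRigid_pathGraph hl5) g (trace_pathGraph_mem_range hK hB hl hl4 hP' hC)
  exact ⟨hl5, L, isFatPathDecomp_iff_isBlowUp.2 hL, hcover⟩

lemma IsFatPath.containsInduced_pathGraph (h : IsFatPath G l) : ContainsInduced G (pathGraph l) :=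
  let ⟨_, _, hL, _⟩ := h
  (isFatPathDecomp_iff_isBlowUp.1 hL).containsInduced

lemma IsFatCycle.containsInduced_pathGraph (h : IsFatCycle G l) :
    ContainsInduced G (pathGraph l) := by
  obtain ⟨hl, L, hL, -⟩ := h
  obtain ⟨g⟩ := ((isFatCycleDecomp_iff_isBlowUp (by omega)).1 hL).containsInduced
  exact (isInducedPath_cycleGraph_embedding (by omega) g 0).containsInduced_pathGraph

end FatFamily

end

theorem stmt3_general {V : Type*} (m : ℕ) (hm : 1 ≤ m) (G : SimpleGraph V)
    (hconn : G.Connected) (hbdd : ∃ n, ¬ ContainsInduced G (pathGraph n))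
    (hK13 : ¬ ContainsInduced G K13) (hB1m : ¬ ContainsInduced G (Bgraph m)) :
    ContainsInduced G (SimpleGraph.pathGraph (max (3 * m) (m + 4))) ↔
      MemFatFamily G (max (3 * m) (m + 4)) := by
  have : Nonempty V := hconn.nonempty
  constructor
  · intro hp
    obtain ⟨l, hl, hP, hP'⟩ := exists_maximal_pathGraph hbdd hp
    by_cases hC : ContainsInduced G (cycleGraph (l + 1))
    · exact ⟨l, hl, .inr (isFatCycle_of_containsInduced_cycleGraph hconn hK13 hB1m (by omega)
        (by omega) (by omega) hC)⟩
    · exact ⟨l, hl, .inl (isFatPath_of_containsInduced_pathGraph hconn hK13 hB1m (by omega)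
        (by omega) (by omega) hP hP' hC)⟩
  · rintro ⟨l, hl, hfat | hfat⟩ <;> exact hfat.containsInduced_pathGraph.pathGraph_mono hl

/-- **Theorem 4 (Statement 3).** Let `m ≥ 1` and let `G` be a connected
`{K_{1,3}, B_{1,m}}`-free graph.  Then `G` contains `P_{max{3m, m+4}}` as an induced
subgraph iff `G` belongs to `𝒫(max{3m, m+4})`. -/
theorem stmt3 {V : Type*} [Fintype V] (m : ℕ) (hm : 1 ≤ m) (G : SimpleGraph V)
    (hconn : G.Connected)
    (hK13 : ¬ ContainsInduced G K13) (hB1m : ¬ ContainsInduced G (Bgraph m)) :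
    ContainsInduced G (SimpleGraph.pathGraph (max (3 * m) (m + 4))) ↔
      MemFatFamily G (max (3 * m) (m + 4)) :=
  stmt3_general m hm G hconn ⟨_, not_containsInduced_pathGraph_card G⟩ hK13 hB1m
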